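/- The derivative of the kernel density estimate evaluated along the mean shift sequence tends to zero: f'(y_j) → 0 as j → ∞. -/

import Mathlib

open Filter Finset

/-!
Up to scaling, each summand of `f` is a convex profile of the squared distance to a data point,
hence lies above its tangent line. Summing the tangent lines at `‖z - xᵢ‖ ^ 2` gives a concave
quadratic minorant of `f` touching it at `z`, and the mean shift `T z` is the vertex of this
paraboloid. With `S z` the total weight, this yields the ascent inequality
`f (T z) - f z ≥ S z * ‖T z - z‖ ^ 2`, while the gradient at `z` is `2 * S z • (T z - z)`. As `S` is
bounded, the squared gradient norms along the iteration are dominated by the increments of the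
bounded sequence `f (y j)`, so they are summable.
-/

open scoped Topology

theorem add_mul_sub_le_of_convexOn_of_hasDerivWithinAt {s : Set ℝ} {φ : ℝ → ℝ} {φ' a b : ℝ}
    (hφ : ConvexOn ℝ s φ) (ha : a ∈ s) (hb : b ∈ s) (hφ' : HasDerivWithinAt φ φ' s a) :
    φ a + φ' * (b - a) ≤ φ b := by
  rcases lt_trichotomy a b with hab | rfl | hba
  · have hslope := hφ.le_slope_of_hasDerivWithinAt ha hb hab hφ'
    rw [slope_def_field, le_div_iff₀ (sub_pos.2 hab)] at hslope
    linarith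
  · simp
  · have hslope := hφ.slope_le_of_hasDerivWithinAt hb ha hba hφ'
    rw [slope_def_field, div_le_iff₀ (sub_pos.2 hba)] at hslope
    linarith

theorem tendsto_zero_of_norm_sq_le_sub {F : Type*} [SeminormedAddCommGroup F] {a : ℕ → F}
    {u : ℕ → ℝ} (hu : BddAbove (Set.range u)) (ha : ∀ j, ‖a j‖ ^ 2 ≤ u (j + 1) - u j) :
    Tendsto a atTop (𝓝 0) := by
  obtain ⟨B, hB⟩ := hu
  have hsummable : Summable fun j ↦ ‖a j‖ ^ 2 := by
    refine summable_of_sum_range_le (c := B - u 0) (fun j ↦ sq_nonneg _) fun m ↦ ?_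
    calc ∑ j ∈ range m, ‖a j‖ ^ 2 ≤ ∑ j ∈ range m, (u (j + 1) - u j) := sum_le_sum fun j _ ↦ ha j
      _ = u m - u 0 := sum_range_sub u m
      _ ≤ B - u 0 := sub_le_sub_right (hB ⟨m, rfl⟩) _
  rw [tendsto_zero_iff_norm_tendsto_zero]
  simpa using hsummable.tendsto_atTop_zero.sqrt

theorem sum_smul_sub_eq_smul_centerMass_sub {R ι E : Type*} [Field R] [AddCommGroup E] [Module R E]
    {s : Finset ι} {w : ι → R} (hw : ∑ i ∈ s, w i ≠ 0) (x : ι → E) (z : E) :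
    ∑ i ∈ s, w i • (x i - z) = (∑ i ∈ s, w i) • (s.centerMass w x - z) := by
  simp only [smul_sub, sum_sub_distrib, ← sum_smul, centerMass, smul_inv_smul₀ hw]

theorem sum_mul_norm_sub_sq_eq_add_centerMass {ι E : Type*} [SeminormedAddCommGroup E]
    [InnerProductSpace ℝ E] {s : Finset ι} {w : ι → ℝ} (hw : ∑ i ∈ s, w i ≠ 0) (x : ι → E) (z : E) :
    ∑ i ∈ s, w i * ‖z - x i‖ ^ 2 = ∑ i ∈ s, w i * ‖s.centerMass w x - x i‖ ^ 2 +
      (∑ i ∈ s, w i) * ‖s.centerMass w x - z‖ ^ 2 := by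
  set m := s.centerMass w x
  have hcross : ∑ i ∈ s, w i * inner ℝ (m - z) (x i - m) = 0 := by
    simp only [← inner_smul_right, ← inner_sum, sum_smul_sub_eq_smul_centerMass_sub hw, m, sub_self,
      smul_zero, inner_zero_right]
  have hexpand (i : ι) : w i * ‖z - x i‖ ^ 2 =
      w i * ‖m - x i‖ ^ 2 + w i * ‖m - z‖ ^ 2 + 2 * (w i * inner ℝ (m - z) (x i - m)) := by
    rw [norm_sub_rev z, norm_sub_rev m (x i), ← sub_add_sub_cancel (x i) m z, norm_add_sq_real,
      real_inner_comm]
    ring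
  simp only [hexpand, sum_add_distrib, ← mul_sum, hcross, ← sum_mul, mul_zero, add_zero]

/-- The profile `k` of a kernel `z ↦ k (‖z‖ ^ 2)` together with the weight function `g = -k'` that
mean shift derives from it. Values at negative arguments are irrelevant, so the derivative at `0` is
one-sided. -/
structure IsMeanShiftProfile (k g : ℝ → ℝ) : Prop where
  convexOn : ConvexOn ℝ (Set.Ici 0) k
  hasDerivWithinAt : ∀ t, 0 ≤ t → HasDerivWithinAt k (-g t) (Set.Ici 0) t
  pos : ∀ t, 0 ≤ t → 0 < g t

namespace IsMeanShiftProfile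

variable {k g : ℝ → ℝ} {s t : ℝ}

theorem mul_sub_le (hk : IsMeanShiftProfile k g) (hs : 0 ≤ s) (ht : 0 ≤ t) :
    g s * (s - t) ≤ k t - k s := by
  have htangent :=
    add_mul_sub_le_of_convexOn_of_hasDerivWithinAt hk.convexOn hs ht (hk.hasDerivWithinAt s hs)
  linarith

theorem apply_le_apply_zero (hk : IsMeanShiftProfile k g) (ht : 0 ≤ t) : k t ≤ k 0 := by
  have hdrop := hk.mul_sub_le ht le_rfl
  have hweight : 0 ≤ g t * (t - 0) := mul_nonneg (hk.pos t ht).le (by simpa using ht)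
  linarith

theorem weight_le_weight_zero (hk : IsMeanShiftProfile k g) (ht : 0 ≤ t) : g t ≤ g 0 := by
  rcases ht.eq_or_lt with rfl | ht'
  · exact le_rfl
  · have h₀ := hk.mul_sub_le le_rfl ht
    have h₁ := hk.mul_sub_le ht le_rfl
    exact le_of_mul_le_mul_right (by linarith) ht'

end IsMeanShiftProfile

section MeanShift

variable {ι E : Type*} [Fintype ι] [NormedAddCommGroup E]

/-- The superposition of the radial functions with profiles `φ i` centred at the points `x i`. For
kernel profiles it is the (unnormalized) density estimate, for their weight functions the total
weight by which the mean shift divides. Individual weights and bandwidths of the data points are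
absorbed into the family `φ`. -/
def radialSum (φ : ι → ℝ → ℝ) (x : ι → E) (z : E) : ℝ :=
  ∑ i, φ i (‖z - x i‖ ^ 2)

theorem radialSum_le_sum_zero {φ : ι → ℝ → ℝ} (hφ : ∀ i t, 0 ≤ t → φ i t ≤ φ i 0) (x : ι → E)
    (z : E) : radialSum φ x z ≤ ∑ i, φ i 0 :=
  sum_le_sum fun i _ ↦ hφ i _ (sq_nonneg _)

theorem radialSum_pos [Nonempty ι] {φ : ι → ℝ → ℝ} (hφ : ∀ i t, 0 ≤ t → 0 < φ i t) (x : ι → E)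
    (z : E) : 0 < radialSum φ x z :=
  sum_pos (fun i _ ↦ hφ i _ (sq_nonneg _)) univ_nonempty

/-- The mean shift map: the average of the points `x i` with weights `g i (‖z - x i‖ ^ 2)`. -/
noncomputable def meanShift [NormedSpace ℝ E] (g : ι → ℝ → ℝ) (x : ι → E) (z : E) : E :=
  univ.centerMass (fun i ↦ g i (‖z - x i‖ ^ 2)) x

theorem radialSum_smul [NormedSpace ℝ E] (φ : ι → ℝ → ℝ) (x : ι → E) (a : ℝ) (z : E) :
    radialSum φ (a • x) (a • z) = radialSum (fun i t ↦ φ i (a ^ 2 * t)) x z := by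
  simp only [radialSum, Pi.smul_apply, ← smul_sub, norm_smul, mul_pow, Real.norm_eq_abs, sq_abs]

theorem meanShift_smul [NormedSpace ℝ E] (g : ι → ℝ → ℝ) (x : ι → E) (a : ℝ) (z : E) :
    meanShift g (a • x) (a • z) = a • meanShift (fun i t ↦ g i (a ^ 2 * t)) x z := by
  simp only [meanShift, Pi.smul_apply, ← smul_sub, norm_smul, mul_pow, Real.norm_eq_abs, sq_abs,
    ← centerMass_smul, Pi.smul_def]

variable [InnerProductSpace ℝ E] [Nonempty ι] {k g : ι → ℝ → ℝ}

theorem hasFDerivAt_radialSum (hk : ∀ i, IsMeanShiftProfile (k i) (g i)) (x : ι → E) (z : E) :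
    HasFDerivAt (radialSum k x)
      (innerSL ℝ ((2 * radialSum g x z) • (meanShift g x z - z))) z := by
  have hsummand (i : ι) : HasFDerivAt (fun z ↦ k i (‖z - x i‖ ^ 2))
      (innerSL ℝ ((2 : ℝ) • g i (‖z - x i‖ ^ 2) • (x i - z))) z := by
    have hsq : HasFDerivAt (fun z ↦ ‖z - x i‖ ^ 2) (2 • innerSL ℝ (z - x i)) z := by
      simpa using ((hasFDerivAt_id z).sub_const (x i)).norm_sq
    refine (((hk i).hasDerivWithinAt _ (sq_nonneg _)).comp_hasFDerivAt z hsq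
      (.of_forall fun _ ↦ sq_nonneg _)).congr_fderiv ?_
    rw [← neg_sub z (x i), ← Nat.cast_smul_eq_nsmul ℝ]
    simp only [map_smul, map_neg, smul_neg, neg_smul, Nat.cast_ofNat, smul_comm (2 : ℝ)]
  have hweight : ∑ i, g i (‖z - x i‖ ^ 2) ≠ 0 := (radialSum_pos (fun i ↦ (hk i).pos) x z).ne'
  refine (HasFDerivAt.fun_sum fun i _ ↦ hsummand i).congr_fderiv ?_
  rw [← map_sum, ← smul_sum, sum_smul_sub_eq_smul_centerMass_sub hweight, mul_smul]
  rfl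

theorem radialSum_mul_norm_meanShift_sub_sq_le (hk : ∀ i, IsMeanShiftProfile (k i) (g i))
    (x : ι → E) (z : E) :
    radialSum g x z * ‖meanShift g x z - z‖ ^ 2 ≤
      radialSum k x (meanShift g x z) - radialSum k x z := by
  have hweight : ∑ i, g i (‖z - x i‖ ^ 2) ≠ 0 := (radialSum_pos (fun i ↦ (hk i).pos) x z).ne'
  calc radialSum g x z * ‖meanShift g x z - z‖ ^ 2
      = ∑ i, g i (‖z - x i‖ ^ 2) * (‖z - x i‖ ^ 2 - ‖meanShift g x z - x i‖ ^ 2) := by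
        simp only [mul_sub, sum_sub_distrib]
        exact eq_sub_of_add_eq' (sum_mul_norm_sub_sq_eq_add_centerMass hweight x z).symm
    _ ≤ ∑ i, (k i (‖meanShift g x z - x i‖ ^ 2) - k i (‖z - x i‖ ^ 2)) :=
        sum_le_sum fun i _ ↦ (hk i).mul_sub_le (sq_nonneg _) (sq_nonneg _)
    _ = radialSum k x (meanShift g x z) - radialSum k x z := sum_sub_distrib ..

theorem norm_fderiv_radialSum_sq_le (hk : ∀ i, IsMeanShiftProfile (k i) (g i)) (x : ι → E) (z : E) :
    ‖fderiv ℝ (radialSum k x) z‖ ^ 2 ≤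
      4 * (∑ i, g i 0) * (radialSum k x (meanShift g x z) - radialSum k x z) := by
  have hweight_pos : 0 < radialSum g x z := radialSum_pos (fun i ↦ (hk i).pos) x z
  have hweight_le : radialSum g x z ≤ ∑ i, g i 0 :=
    radialSum_le_sum_zero (fun i _ ↦ (hk i).weight_le_weight_zero) x z
  have hbound_nonneg : 0 ≤ 4 * ∑ i, g i 0 :=
    mul_nonneg zero_le_four (hweight_pos.le.trans hweight_le)
  have hascent := radialSum_mul_norm_meanShift_sub_sq_le hk x z
  calc ‖fderiv ℝ (radialSum k x) z‖ ^ 2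
      = 4 * radialSum g x z * (radialSum g x z * ‖meanShift g x z - z‖ ^ 2) := by
        rw [(hasFDerivAt_radialSum hk x z).fderiv, innerSL_apply_norm, norm_smul, mul_pow,
          Real.norm_eq_abs, sq_abs]
        ring
    _ ≤ 4 * (∑ i, g i 0) * (radialSum k x (meanShift g x z) - radialSum k x z) := by gcongr

theorem mean_shift_deriv_tendsto_zero_general (hk : ∀ i, IsMeanShiftProfile (k i) (g i))
    (x : ι → E) {y : ℕ → E} (hy : ∀ j, y (j + 1) = meanShift g x (y j)) :
    Tendsto (fun j ↦ fderiv ℝ (radialSum k x) (y j)) atTop (𝓝 0) := by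
  have hbound_nonneg : 0 ≤ 4 * ∑ i, g i 0 :=
    mul_nonneg zero_le_four (sum_nonneg fun i _ ↦ ((hk i).pos 0 le_rfl).le)
  refine tendsto_zero_of_norm_sq_le_sub (u := fun j ↦ 4 * (∑ i, g i 0) * radialSum k x (y j))
    ⟨4 * (∑ i, g i 0) * ∑ i, k i 0, ?_⟩ fun j ↦ ?_
  · rintro _ ⟨j, rfl⟩
    exact mul_le_mul_of_nonneg_left
      (radialSum_le_sum_zero (fun i _ ↦ (hk i).apply_le_apply_zero) x (y j)) hbound_nonneg
  · rw [← mul_sub, hy]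
    exact norm_fderiv_radialSum_sq_le hk x (y j)

end MeanShift

theorem mean_shift_deriv_tendsto_zero
(n : ℕ) (hn : 0 < n) (x : Fin n → ℝ) (h : ℝ) (hh : 0 < h)
(c : ℝ) (hc : 0 < c)
    (k g : ℝ → ℝ)
    (hk_nonneg : ∀ t ∈ Set.Ici (0:ℝ), 0 ≤ k t)
    (hk_conv : ConvexOn ℝ (Set.Ici 0) k)
    (hk_smooth : ContDiff ℝ 1 k)
    (hk_anti : StrictAntiOn k (Set.Ici 0))
    (hg : ∀ t, g t = -(deriv k t))
    (hg_pos : ∀ t ∈ Set.Ici (0:ℝ), 0 < g t)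
    (hg_anti : StrictAntiOn g (Set.Ici 0))
    (f T : ℝ → ℝ)
    (hf : ∀ z, f z = c / (n * h) * ∑ i, k (((z - x i) / h) ^ 2))
    (hT : ∀ z, T z = (∑ i, x i * g (((z - x i) / h) ^ 2)) / (∑ i, g (((z - x i) / h) ^ 2)))
(y : ℕ → ℝ) (hy0 : ∃ i, y 0 = x i) (hyit : ∀ j, y (j + 1) = T (y j)) :
    Tendsto (fun j => deriv f (y j)) atTop (nhds 0) := by
  have : Nonempty (Fin n) := Fin.pos_iff_nonempty.1 hn
  have hk : IsMeanShiftProfile k g := ⟨hk_conv, fun t _ ↦ by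
    simpa [hg] using (hk_smooth.differentiable one_ne_zero t).hasDerivAt.hasDerivWithinAt, hg_pos⟩
  have hT_meanShift (z : ℝ) : T z = meanShift (fun _ t ↦ g (h⁻¹ ^ 2 * t)) x z := by
    simp [hT, meanShift, centerMass, div_eq_inv_mul, mul_pow, mul_comm (x _)]
  -- Measuring lengths in units of `h` turns the estimate and the iteration into bandwidth one.
  have hf_scaled : f = fun z ↦ c / (n * h) * radialSum (fun _ ↦ k) (h⁻¹ • x) (h⁻¹ * z) := by
    ext z
    rw [← smul_eq_mul h⁻¹ z, radialSum_smul]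
    simp [hf, radialSum, div_eq_inv_mul, mul_pow]
  have hfderiv := mean_shift_deriv_tendsto_zero_general (fun _ ↦ hk) (h⁻¹ • x) (y := h⁻¹ • y)
    fun j ↦ by simp only [Pi.smul_apply, hyit, hT_meanShift, meanShift_smul]
  have hderiv : Tendsto (fun j ↦ deriv (radialSum (fun _ ↦ k) (h⁻¹ • x)) (h⁻¹ * y j)) atTop
      (nhds 0) := by
    rw [tendsto_zero_iff_norm_tendsto_zero] at hfderiv ⊢
    simpa only [norm_deriv_eq_norm_fderiv, Pi.smul_apply, smul_eq_mul] using hfderiv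
  simpa [hf_scaled, deriv_comp_mul_left] using (hderiv.const_mul h⁻¹).const_mul (c / (n * h))
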